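/- For every odd integer k ≥ 5, the digraph S_k with incoming vertices i_1,…,i_k and outgoing vertices o_1,…,o_k is a k-in-out graph, and it has exactly 2k−1 vertices, which is the minimum possible number of vertices for a k-in-out graph. -/

import Mathlib

/-- A directed path in the digraph with edge relation `E` and vertex set `Vset`:
a nonempty list of distinct vertices of `Vset`, with consecutive vertices joined
by directed edges. -/
def IsPathOn {α : Type*} (E : α → α → Prop) (Vset : Finset α) (p : List α) : Prop :=
  p ≠ [] ∧ p.Nodup ∧ p.Chain' E ∧ ∀ x ∈ p, x ∈ Vset

/-- A Hamiltonian path from `u` to `v` in the digraph with edge relation `E`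
and vertex set `Vset`: a list of distinct vertices containing every vertex of `Vset`
(and no others), starting at `u`, ending at `v`, with consecutive vertices joined
by directed edges. -/
def IsHamPathOn {α : Type*} (E : α → α → Prop) (Vset : Finset α) (u v : α)
    (p : List α) : Prop :=
  p.Nodup ∧ p.Chain' E ∧ p.head? = some u ∧ p.getLast? = some v ∧ ∀ x, x ∈ p ↔ x ∈ Vset

/-- The single visit condition: there is no collection of two or more pairwise
vertex-disjoint directed paths, each starting at an incoming vertex and ending at an
outgoing vertex, whose union visits every vertex. -/
def SingleVisit {α : Type*} (E : α → α → Prop) (Vset : Finset α) {k : ℕ}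
    (inc out : Fin k → α) : Prop :=
  ¬ ∃ P : Finset (List α), 2 ≤ P.card ∧
      (∀ p ∈ P, IsPathOn E Vset p ∧ (∃ j, p.head? = some (inc j)) ∧
        (∃ m, p.getLast? = some (out m))) ∧
      (∀ p ∈ P, ∀ q ∈ P, p ≠ q → ∀ x, x ∈ p → x ∉ q) ∧
      (∀ x ∈ Vset, ∃ p ∈ P, x ∈ p)

/-- A `k`-in-out graph: a digraph (no loops, all edges within the vertex set) together
with `k` distinct incoming vertices and `k` distinct outgoing vertices (the two sets may
overlap), satisfying the paired vertices condition and the single visit condition. -/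
structure IsInOutGraph {α : Type*} (E : α → α → Prop) (Vset : Finset α) {k : ℕ}
    (inc out : Fin k → α) : Prop where
  no_loops : ∀ x, ¬ E x x
  edge_mem : ∀ x y, E x y → x ∈ Vset ∧ y ∈ Vset
  inc_mem : ∀ j, inc j ∈ Vset
  out_mem : ∀ j, out j ∈ Vset
  inc_inj : Function.Injective inc
  out_inj : Function.Injective out
  paired : ∀ j m, (∃ p, IsHamPathOn E Vset (inc j) (out m) p) ↔ j = m
  single_visit : SingleVisit E Vset inc out

/-- The directed edge set of the graph `S_k` for odd `k ≥ 5`. -/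
def oddEdges (k : ℕ) : Finset (ℕ × ℕ) :=
  ((Finset.Icc 1 ((k - 1) / 2)).biUnion fun i =>
      {(4*i-2, 4*i-1), (4*i-1, 4*i-2), (4*i-1, 4*i), (4*i, 4*i-1),
        (4*i, 4*i+1), (4*i+1, 4*i)}) ∪
  ((Finset.Icc 1 ((k - 3) / 2)).biUnion fun i => {(4*i-2, 4*i+5), (4*i+1, 4*i+2)}) ∪
  ({(1, 2), (2*k-4, 1), (2*k-2, 5)} : Finset (ℕ × ℕ))

/-- The `m`-th outgoing vertex `o_m` (with `1 ≤ m ≤ k`) of `S_k` for odd `k ≥ 5`: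
`o_1 = 2k-1`, `o_{k-1} = 3`, `o_k = 2k-5`, and otherwise
`o_{2j} = 4j+3` and `o_{2j+1} = 4j-3`. -/
def oddOut (k m : ℕ) : ℕ :=
  if m = 1 then 2*k - 1
  else if m = k - 1 then 3
  else if m = k then 2*k - 5
  else if Even m then 2*m + 3
  else 2*m - 5

/-!
Write `k = 2 * K + 1`. Every edge of `S_k` joins vertices of different parity and all incoming and
outgoing vertices are odd, so a path from an incoming to an outgoing vertex visits one more odd
than even vertex. Since `{1, …, 4 * K + 1}` also has one more odd than even element, a single such
path must cover it.

A Hamiltonian path of `S_k` ending at an odd vertex `v` has to step from `x` to `x + 1` at every odd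
`x < v` and from `x` to `x - 1` at every odd `x > v`. This leaves two odd vertices with the same
even vertex as their only possible predecessor, so one of them is the start, and it turns out to be
determined by `v`.

For minimality, let a Hamiltonian path start at one incoming vertex. The predecessor on it of any
other incoming vertex is not outgoing, as cutting the path between the two would violate the single
visit condition. Hence the `k - 1` predecessors and the `k` outgoing vertices are all distinct.
-/

section PairInfix

variable {α : Type*} {p : List α} {u v w x y z m : α}

theorem pair_infix_iff_getElem? :
    [x, y] <:+: p ↔ ∃ i, p[i]? = some x ∧ p[i + 1]? = some y := by
  rw [List.infix_iff_getElem?]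
  constructor
  · rintro ⟨i, -, h⟩
    exact ⟨i, by simpa using h 0 (by simp), by simpa [add_comm] using h 1 (by simp)⟩
  · rintro ⟨i, hx, hy⟩
    have := (List.getElem?_eq_some_iff.1 hy).1
    refine ⟨i, by simp; omega, fun j hj => ?_⟩
    match j, hj with
    | 0, _ => simpa using hx
    | 1, _ => simpa [add_comm] using hy

theorem rel_of_pair_infix {R : α → α → Prop} (hp : p.IsChain R) (h : [x, y] <:+: p) : R x y := by
  simpa using hp.infix h

theorem pair_infix_right_unique (hp : p.Nodup) (hy : [x, y] <:+: p) (hz : [x, z] <:+: p) :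
    y = z := by
  simp only [pair_infix_iff_getElem?] at hy hz
  grind [List.getElem?_inj]

theorem pair_infix_left_unique (hp : p.Nodup) (hx : [x, z] <:+: p) (hy : [y, z] <:+: p) :
    x = y := by
  simp only [pair_infix_iff_getElem?] at hx hy
  grind [List.getElem?_inj]

theorem pair_infix_asymm (hp : p.Nodup) (h : [x, y] <:+: p) : ¬ [y, x] <:+: p := by
  simp only [pair_infix_iff_getElem?] at h ⊢
  grind [List.getElem?_inj]

theorem exists_pair_infix_of_getLast?_ne (hx : x ∈ p) (hv : p.getLast? ≠ some x) :
    ∃ y, [x, y] <:+: p := by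
  obtain ⟨s, t, rfl⟩ := List.append_of_mem hx
  cases t with
  | nil => simp at hv
  | cons y t => exact ⟨y, s, t, by simp⟩

theorem exists_pair_infix_of_head?_ne (hx : x ∈ p) (hu : p.head? ≠ some x) :
    ∃ y, [y, x] <:+: p := by
  obtain ⟨s, t, rfl⟩ := List.append_of_mem hx
  rcases s.eq_nil_or_concat with rfl | ⟨s, y, rfl⟩
  · simp at hu
  · exact ⟨y, s, t, by simp⟩

theorem length_eq_three_of_pair_infix (hp : p.Nodup) (hu : p.head? = some u)
    (hv : p.getLast? = some v) (hux : [u, x] <:+: p) (hxv : [x, v] <:+: p) : p.length = 3 := by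
  simp only [pair_infix_iff_getElem?, List.head?_eq_getElem?, List.getLast?_eq_getElem?] at *
  grind [List.getElem?_inj]

-- If `w` had a predecessor it would be `y`, leaving none for `z`: the path would be `z, m, v`.
theorem head_eq_of_common_predecessor (hp : p.Nodup) (hlen : 3 < p.length)
    (hu : p.head? = some u) (hv : p.getLast? = some v) (hw : w ∈ p) (hwz : w ≠ z) (hmv : m ≠ v)
    (hzm : [z, m] <:+: p) (hw_pred : ∀ x, [x, w] <:+: p → x = y)
    (hz_pred : ∀ x, [x, z] <:+: p → x = y) (hm_succ : ∀ x, [m, x] <:+: p → x = v) : u = w := by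
  by_contra huw
  obtain ⟨a, haw⟩ := exists_pair_infix_of_head?_ne hw (by simpa [hu] using huw)
  obtain rfl := hw_pred a haw
  have hzu : u = z := by
    by_contra huz
    obtain ⟨b, hbz⟩ :=
      exists_pair_infix_of_head?_ne (hzm.mem (a := z) (by simp)) (by simpa [hu] using huz)
    obtain rfl := hz_pred b hbz
    exact hwz (pair_infix_right_unique hp haw hbz)
  subst hzu
  obtain ⟨b, hmb⟩ :=
    exists_pair_infix_of_getLast?_ne (hzm.mem (a := m) (by simp)) (by simpa [hv] using hmv.symm)
  obtain rfl := hm_succ b hmb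
  exact hlen.ne' (length_eq_three_of_pair_infix hp hu hv hzm hmb)

end PairInfix

section HamPath

variable {α : Type*} {E : α → α → Prop} {A B V : Finset α} {u v x y : α} {p : List α}

theorem IsHamPathOn.length_eq_card (hp : IsHamPathOn E V u v p) : p.length = V.card := by
  classical
  rw [← List.toFinset_card_of_nodup hp.1]
  congr 1
  ext x
  simp [hp.2.2.2.2 x]

/-- The digraph with edge relation `E` has a Hamiltonian path on `V` from `u` to `v`. Only edges
inside `V` matter, so `V` may be part of a larger vertex set and paths can be glued. -/
def HasHamPath (E : α → α → Prop) (V : Finset α) (u v : α) : Prop :=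
  ∃ p, IsHamPathOn E V u v p

theorem hasHamPath_singleton : HasHamPath E {u} u u :=
  ⟨[u], by simp, List.isChain_singleton u, by simp, by simp, by simp⟩

theorem HasHamPath.append [DecidableEq α] (hA : HasHamPath E A u x) (hxy : E x y)
    (hB : HasHamPath E B y v) (hAB : Disjoint A B) : HasHamPath E (A ∪ B) u v := by
  obtain ⟨p, hp, hpE, hpu, hpx, hpA⟩ := hA
  obtain ⟨q, hq, hqE, hqy, hqv, hqB⟩ := hB
  refine ⟨p ++ q, ?_, List.isChain_append.2 ⟨hpE, hqE, ?_⟩, by simp [hpu], by simp [hqv], ?_⟩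
  · exact hp.append hq fun a hap haq =>
      Finset.disjoint_left.1 hAB ((hpA a).1 hap) ((hqB a).1 haq)
  · simpa [hpx, hqy] using hxy
  · simp [hpA, hqB]

theorem HasHamPath.reverse (h : HasHamPath (fun x y => E y x) V v u) : HasHamPath E V u v := by
  obtain ⟨p, hp, hpE, hpv, hpu, hpV⟩ := h
  exact ⟨p.reverse, List.nodup_reverse.2 hp, List.isChain_reverse.2 hpE, by simpa, by simpa,
    by simpa⟩

theorem hasHamPath_Icc_ascending {E : ℕ → ℕ → Prop} {a b : ℕ} (hab : a ≤ b)
    (hE : ∀ x, a ≤ x → x < b → E x (x + 1)) : HasHamPath E (Finset.Icc a b) a b := by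
  induction b, hab using Nat.le_induction with
  | base => simpa using hasHamPath_singleton
  | succ b hab ih =>
    rw [← Finset.insert_Icc_right_eq_Icc_add_one (by omega), Finset.insert_eq, Finset.union_comm]
    exact (ih fun x hax hxb => hE x hax (by omega)).append (hE b hab (by omega))
      hasHamPath_singleton (by simp)

theorem hasHamPath_Icc_descending {E : ℕ → ℕ → Prop} {a b : ℕ} (hab : a ≤ b)
    (hE : ∀ x, a ≤ x → x < b → E (x + 1) x) : HasHamPath E (Finset.Icc a b) b a :=
  (hasHamPath_Icc_ascending hab hE).reverse

end HamPath

section InOut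

variable {α : Type*} {E : α → α → Prop} {V : Finset α} {k : ℕ} {inc out : Fin k → α}

theorem SingleVisit.not_isHamPathOn_append (h : SingleVisit E V inc out) {i j l m : Fin k}
    {q r : List α} (hq : q.getLast? = some (out m)) (hr : r.head? = some (inc l)) :
    ¬ IsHamPathOn E V (inc i) (out j) (q ++ r) := by
  classical
  rintro ⟨hnodup, hchain, hhead, hlast, hmem⟩
  have q_ne : q ≠ [] := by rintro rfl; simp at hq
  have r_ne : r ≠ [] := by rintro rfl; simp at hr
  obtain ⟨hq_nodup, hr_nodup, hdisj⟩ := List.nodup_append'.1 hnodup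
  obtain ⟨hq_chain, hr_chain, -⟩ := List.isChain_append.1 hchain
  have q_ne_r : q ≠ r := by
    rintro rfl
    exact hdisj (List.mem_of_getLast? hq) (List.mem_of_getLast? hq)
  refine h ⟨{q, r}, (Finset.card_pair q_ne_r).ge, ?_, ?_, ?_⟩
  · simp only [Finset.mem_insert, Finset.mem_singleton, forall_eq_or_imp, forall_eq]
    refine ⟨⟨⟨q_ne, hq_nodup, hq_chain, fun x hx => (hmem x).1 (by simp [hx])⟩, ⟨i, ?_⟩, m, hq⟩,
      ⟨r_ne, hr_nodup, hr_chain, fun x hx => (hmem x).1 (by simp [hx])⟩, ⟨l, hr⟩, j, ?_⟩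
    · rwa [List.head?_append_of_ne_nil _ q_ne] at hhead
    · rwa [List.getLast?_append_of_ne_nil _ r_ne] at hlast
  · simp only [Finset.mem_insert, Finset.mem_singleton, forall_eq_or_imp, forall_eq]
    exact ⟨⟨fun hqq => absurd rfl hqq, fun _ _ => @hdisj _⟩,
      fun _ _ hxr hxq => hdisj hxq hxr, fun hrr => absurd rfl hrr⟩
  · simp [← hmem]

theorem SingleVisit.predecessor_ne_out (h : SingleVisit E V inc out) {i j l m : Fin k}
    {p : List α} (hp : IsHamPathOn E V (inc i) (out j) p) {x : α}
    (hx : [x, inc l] <:+: p) : x ≠ out m := by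
  rintro rfl
  obtain ⟨s, t, rfl⟩ := hx
  exact h.not_isHamPathOn_append (q := s ++ [out m]) (r := inc l :: t) (m := m) (l := l)
    (by simp) (by simp) (by simpa using hp)

theorem IsInOutGraph.two_mul_sub_one_le_card (h : IsInOutGraph E V inc out) :
    2 * k - 1 ≤ V.card := by
  cases k with
  | zero => simp
  | succ k =>
    obtain ⟨p, hp⟩ := (h.paired 0 0).2 rfl
    have exists_pred (j : Fin k) : ∃ x, [x, inc j.succ] <:+: p :=
      exists_pair_infix_of_head?_ne ((hp.2.2.2.2 _).2 (h.inc_mem _))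
        (by simpa [hp.2.2.1] using h.inc_inj.ne (Fin.succ_ne_zero j).symm)
    choose pred hpred using exists_pred
    have pred_inj : Function.Injective pred := fun i j hij =>
      Fin.succ_injective _ (h.inc_inj (pair_infix_right_unique hp.1 (hpred i) (hij ▸ hpred j)))
    have sum_inj : Function.Injective (Sum.elim pred out) :=
      pred_inj.sumElim h.out_inj fun j m => h.single_visit.predecessor_ne_out hp (hpred j)
    have sum_mem : ∀ a, Sum.elim pred out a ∈ V := by
      rintro (j | m)
      · exact (h.edge_mem _ _ (rel_of_pair_infix hp.2.1 (hpred j))).1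
      · exact h.out_mem m
    have := Finset.card_le_card_of_injOn (s := Finset.univ) (Sum.elim pred out)
      (fun a _ => sum_mem a) sum_inj.injOn
    simp only [Finset.card_univ, Fintype.card_sum, Fintype.card_fin] at this
    omega

-- Doubling avoids splitting into cases by the parity of the length of `p`.
theorem two_mul_sum_map_of_alternating {w : α → ℤ} (hw : ∀ x y, E x y → w y = -w x) {a b : α}
    {p : List α} (hp : p.IsChain E) (ha : p.head? = some a) (hb : p.getLast? = some b) :
    2 * (p.map w).sum = w a + w b := by
  induction p generalizing a with
  | nil => simp at ha
  | cons x p ih =>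
    obtain rfl : x = a := by simpa using ha
    cases p with
    | nil =>
      obtain rfl : x = b := by simpa using hb
      simp [two_mul]
    | cons y p =>
      rw [List.isChain_cons_cons] at hp
      have := ih hp.2 rfl (by simpa using hb)
      rw [List.map_cons, List.sum_cons, mul_add, this, hw x y hp.1]
      ring

theorem singleVisit_of_alternating {w : α → ℤ} (hw : ∀ x y, E x y → w y = -w x)
    (hinc : ∀ j, w (inc j) = 1) (hout : ∀ j, w (out j) = 1) (hV : ∑ x ∈ V, w x ≤ 1) :
    SingleVisit E V inc out := by
  classical
  rintro ⟨P, hcard, hpath, hdisj, hcover⟩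
  have hVP : V = P.biUnion List.toFinset := by
    ext x
    simp only [Finset.mem_biUnion, List.mem_toFinset]
    exact ⟨hcover x, fun ⟨p, hp, hx⟩ => (hpath p hp).1.2.2.2 x hx⟩
  have sum_path : ∀ p ∈ P, ∑ x ∈ p.toFinset, w x = 1 := by
    intro p hp
    obtain ⟨⟨-, hnodup, hchain, -⟩, ⟨j, hj⟩, m, hm⟩ := hpath p hp
    have := two_mul_sum_map_of_alternating hw hchain hj hm
    rw [hinc, hout] at this
    rw [List.sum_toFinset w hnodup]
    omega
  have pairwise_disjoint : (P : Set (List α)).PairwiseDisjoint List.toFinset :=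
    fun p hp q hq hpq => Finset.disjoint_left.2 fun x hxp hxq =>
      hdisj p hp q hq hpq x (List.mem_toFinset.1 hxp) (List.mem_toFinset.1 hxq)
  rw [hVP, Finset.sum_biUnion pairwise_disjoint, Finset.sum_congr rfl sum_path] at hV
  simp only [Finset.sum_const, nsmul_eq_mul, mul_one] at hV
  omega

end InOut

section OddGraph

/-- The edge relation of `S_k` for `k = 2 * K + 1`, in closed form: steps `x → x + 1` and
`x → x - 1`, the latter not from `x ≡ 2 (mod 4)`, the jumps `4 * i - 2 → 4 * i + 5`, and the two
edges closing up the graph. -/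
def OddAdj (K x y : ℕ) : Prop :=
  (1 ≤ x ∧ y = x + 1 ∧ y ≤ 4 * K + 1) ∨ (3 ≤ x ∧ x ≤ 4 * K + 1 ∧ x % 4 ≠ 2 ∧ x = y + 1) ∨
    (x % 4 = 2 ∧ y = x + 7 ∧ y ≤ 4 * K + 1) ∨ (x = 4 * K - 2 ∧ y = 1) ∨ (x = 4 * K ∧ y = 5)

variable {K j n u v x y z m : ℕ} {p : List ℕ}

theorem mem_oddEdges_iff (hK : 1 ≤ K) : (x, y) ∈ oddEdges (2 * K + 1) ↔ OddAdj K x y := by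
  have half_sub_one : (2 * K + 1 - 1) / 2 = K := by omega
  have half_sub_three : (2 * K + 1 - 3) / 2 = K - 1 := by omega
  simp only [oddEdges, half_sub_one, half_sub_three, Finset.mem_union, Finset.mem_biUnion,
    Finset.mem_insert, Finset.mem_singleton, Prod.mk.injEq, Finset.mem_Icc, OddAdj]
  constructor
  · rintro ((⟨i, hi, ⟨rfl, rfl⟩ | ⟨rfl, rfl⟩ | ⟨rfl, rfl⟩ | ⟨rfl, rfl⟩ | ⟨rfl, rfl⟩ | ⟨rfl, rfl⟩⟩ |
      ⟨i, hi, ⟨rfl, rfl⟩ | ⟨rfl, rfl⟩⟩) | ⟨rfl, rfl⟩ | ⟨rfl, rfl⟩ | ⟨rfl, rfl⟩) <;> omega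
  · have block (hx : 2 ≤ x) : ∃ i, x = 4 * i + 2 ∨ x = 4 * i + 3 ∨ x = 4 * i + 4 ∨ x = 4 * i + 5 :=
      ⟨(x - 2) / 4, by omega⟩
    rintro (⟨hx, rfl, hxK⟩ | ⟨hx, hxK, hmod, hxy⟩ | ⟨hmod, rfl, hxK⟩ | h | h)
    · obtain rfl | hx2 := hx.eq_or_lt
      · exact .inr (by omega)
      obtain ⟨i, rfl | rfl | rfl | rfl⟩ := block hx2
      iterate 3 exact .inl (.inl ⟨i + 1, by omega, by omega⟩)
      · exact .inl (.inr ⟨i + 1, by omega, by omega⟩)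
    · obtain ⟨i, hi⟩ := block (by omega)
      obtain rfl : y = x - 1 := by omega
      obtain rfl | rfl | rfl : x = 4 * i + 3 ∨ x = 4 * i + 4 ∨ x = 4 * i + 5 := by omega
      all_goals exact .inl (.inl ⟨i + 1, by omega, by omega⟩)
    · exact .inl (.inr ⟨(x + 2) / 4, by omega, by omega⟩)
    · exact .inr (by omega)
    · exact .inr (by omega)

theorem OddAdj.odd_add (h : OddAdj K x y) : Odd (x + y) := by
  rw [Nat.odd_iff]; unfold OddAdj at h; omega

/-- The edges from an even vertex `x` to an odd vertex `y` that remain available to a Hamiltonian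
path ending at `v`, once the forced steps `z → z + 1` from odd `z < v` and `z → z - 1` from odd
`z > v` are taken into account. -/
def OddStep (K v x y : ℕ) : Prop :=
  OddAdj K x y ∧ ¬ (y < v ∧ x = y + 1) ∧ ¬ (v < x ∧ y = x + 1) ∧ ¬ (4 < v ∧ x = 4 * K ∧ y = 5)

section ForcedSteps

variable (hp : IsHamPathOn (OddAdj K) (Finset.Icc 1 (4 * K + 1)) u v p)
include hp

theorem exists_oddAdj_pair_infix (hx : x ∈ Finset.Icc 1 (4 * K + 1)) (hxv : x ≠ v) :
    ∃ y, OddAdj K x y ∧ [x, y] <:+: p := by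
  obtain ⟨y, hy⟩ := exists_pair_infix_of_getLast?_ne ((hp.2.2.2.2 x).2 hx)
    (by simpa [hp.2.2.2.1] using hxv.symm)
  exact ⟨y, rel_of_pair_infix hp.2.1 hy, hy⟩

theorem pair_infix_succ_of_odd_of_lt (hx : x % 2 = 1) (hxv : x < v) : [x, x + 1] <:+: p := by
  have hvK : v ≤ 4 * K + 1 :=
    (Finset.mem_Icc.1 ((hp.2.2.2.2 v).1 (List.mem_of_getLast? hp.2.2.2.1))).2
  induction x using Nat.strong_induction_on with
  | h x ih =>
    obtain ⟨y, hxy, hy⟩ := exists_oddAdj_pair_infix hp (by simp; omega) hxv.ne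
    obtain rfl | ⟨hx3, rfl⟩ : y = x + 1 ∨ 3 ≤ x ∧ y = x - 2 + 1 := by unfold OddAdj at hxy; omega
    · exact hy
    · have := pair_infix_left_unique hp.1 hy (ih (x - 2) (by omega) (by omega) (by omega))
      omega

theorem pair_infix_pred_of_even_of_lt (hx : x % 2 = 0) (hvx : v < x) (hxK : x ≤ 4 * K) :
    [x + 1, x] <:+: p := by
  induction h : 4 * K - x using Nat.strong_induction_on generalizing x with
  | h d ih =>
    obtain ⟨y, hxy, hy⟩ := exists_oddAdj_pair_infix (x := x + 1) hp (by simp; omega) (by omega)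
    obtain rfl | ⟨hxK', rfl⟩ : y = x ∨ x + 2 ≤ 4 * K ∧ y = x + 2 := by
      unfold OddAdj at hxy; omega
    · exact hy
    · have := pair_infix_left_unique hp.1 hy
        (ih (4 * K - (x + 2)) (by omega) (by omega) (by omega) (by omega) rfl)
      omega

-- When `4 < v` the path steps from `3` to `4`, and then `5` is the only way out of `4`.
theorem pair_infix_four_five (hK : 1 ≤ K) (hv : 4 < v) : [4, 5] <:+: p := by
  obtain ⟨y, hy, h4y⟩ := exists_oddAdj_pair_infix (x := 4) hp (by simp; omega) (by omega)
  obtain rfl | rfl : y = 3 ∨ y = 5 := by unfold OddAdj at hy; omega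
  · exact absurd h4y
      (pair_infix_asymm hp.1 (pair_infix_succ_of_odd_of_lt hp (by norm_num) (by omega)))
  · exact h4y

theorem pair_infix_of_odd (hz : z % 2 = 1) (hzK : z ≤ 4 * K + 1)
    (h : z < v ∧ m = z + 1 ∨ v < z ∧ z = m + 1) (hv : v % 2 = 1) : [z, m] <:+: p := by
  obtain ⟨hzv, rfl⟩ | ⟨hvz, rfl⟩ := h
  · exact pair_infix_succ_of_odd_of_lt hp hz hzv
  · exact pair_infix_pred_of_even_of_lt hp (by omega) (by omega) (by omega)

theorem oddStep_of_pair_infix (hK : 2 ≤ K) (hxy : [x, y] <:+: p) (hy : y % 2 = 1) :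
    OddStep K v x y := by
  have hadj := rel_of_pair_infix hp.2.1 hxy
  refine ⟨hadj, ?_, ?_, ?_⟩
  · rintro ⟨hyv, rfl⟩
    exact pair_infix_asymm hp.1 hxy (pair_infix_succ_of_odd_of_lt hp hy hyv)
  · rintro ⟨hvx, rfl⟩
    refine pair_infix_asymm hp.1 hxy (pair_infix_pred_of_even_of_lt hp (by omega) hvx ?_)
    unfold OddAdj at hadj; omega
  · rintro ⟨hv, rfl, rfl⟩
    have := pair_infix_left_unique hp.1 hxy (pair_infix_four_five hp (by omega) hv)
    omega

theorem start_eq_of_oddStep (hK : 2 ≤ K) (hv : v % 2 = 1) (w y z m : ℕ)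
    (hw : w ∈ Finset.Icc 1 (4 * K + 1)) (hw_odd : w % 2 = 1) (hz_odd : z % 2 = 1)
    (hzK : z ≤ 4 * K + 1) (hwz : w ≠ z) (hzm : z < v ∧ m = z + 1 ∨ v < z ∧ z = m + 1)
    (hw_pred : ∀ x, OddStep K v x w → x = y) (hz_pred : ∀ x, OddStep K v x z → x = y)
    (hm_succ : ∀ x, OddStep K v m x → x = v) : u = w := by
  refine head_eq_of_common_predecessor hp.1 ?_ hp.2.2.1 hp.2.2.2.1 ((hp.2.2.2.2 w).2 hw) hwz
    (by omega) (pair_infix_of_odd hp hz_odd hzK hzm hv)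
    (fun x hx => hw_pred x (oddStep_of_pair_infix hp hK hx hw_odd))
    (fun x hx => hz_pred x (oddStep_of_pair_infix hp hK hx hz_odd))
    (fun x hx => hm_succ x (oddStep_of_pair_infix hp hK hx ?_))
  · rw [hp.length_eq_card, Nat.card_Icc]; omega
  · have := (rel_of_pair_infix hp.2.1 hx).odd_add
    rw [Nat.odd_iff] at this
    omega

end ForcedSteps

/-- The incoming vertex paired with the outgoing vertex `v` in `S_k`, `k = 2 * K + 1`. -/
def oddPartner (K v : ℕ) : ℕ :=
  if v = 4 * K + 1 then 1
  else if v = 3 then 4 * K - 1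
  else if v % 4 = 1 then v + 4
  else v - 4

theorem IsHamPathOn.eq_oddPartner (hK : 2 ≤ K) (hv : v % 2 = 1)
    (hp : IsHamPathOn (OddAdj K) (Finset.Icc 1 (4 * K + 1)) u v p) : u = oddPartner K v := by
  have hvK := Finset.mem_Icc.1 ((hp.2.2.2.2 v).1 (List.mem_of_getLast? hp.2.2.2.1))
  have start_eq := start_eq_of_oddStep hp hK hv
  simp only [Finset.mem_Icc, OddStep, OddAdj] at start_eq
  unfold oddPartner
  -- In each case `y` is the only way left into both `w` and `z`, and `v` the only way out of the
  -- vertex `m` that the path is forced to visit after `z`.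
  split_ifs with h_last h_three h_mod
  · apply start_eq 1 (4 * K - 2) (4 * K - 1) (4 * K) <;> omega
  · apply start_eq (4 * K - 1) (4 * K) 5 4 <;> omega
  · obtain rfl | h_one := eq_or_ne v 1
    · apply start_eq 5 (4 * K) (4 * K - 1) (4 * K - 2) <;> omega
    · apply start_eq (v + 4) (v - 3) (v - 2) (v - 1) <;> omega
  · apply start_eq (v - 4) (v - 5) (v + 2) (v + 1) <;> omega

theorem hasHamPath_oddAdj_ascending {a b : ℕ} (ha : 1 ≤ a) (hab : a ≤ b) (hb : b ≤ 4 * K + 1) :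
    HasHamPath (OddAdj K) (Finset.Icc a b) a b :=
  hasHamPath_Icc_ascending hab fun x hax hxb => by unfold OddAdj; omega

-- The last hypothesis says that no `x ≡ 1 (mod 4)` lies in `[a, b)`.
theorem hasHamPath_oddAdj_descending {a b : ℕ} (ha : 2 ≤ a) (hab : a ≤ b) (hb : b ≤ 4 * K + 1)
    (hmod : (b + 2) / 4 ≤ (a + 2) / 4) : HasHamPath (OddAdj K) (Finset.Icc a b) b a :=
  hasHamPath_Icc_descending hab fun x hax hxb => by unfold OddAdj; omega

theorem hasHamPath_oddAdj_blocks (hjn : j ≤ n) (hnK : n < K) :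
    HasHamPath (OddAdj K) ({4 * j + 2} ∪ Finset.Icc (4 * j + 6) (4 * n + 5))
      (4 * j + 2) (4 * n + 2) := by
  induction n, hjn using Nat.le_induction with
  | base => simpa using hasHamPath_singleton
  | succ n hjn ih =>
    have block : HasHamPath (OddAdj K) (Finset.Icc (4 * n + 6) (4 * n + 9))
        (4 * n + 9) (4 * n + 6) :=
    hasHamPath_oddAdj_descending (by omega) (by omega) (by omega) (by omega)
    convert (ih (by omega)).append (by unfold OddAdj; omega) block
      (by grind [Finset.disjoint_left]) using 1
    · ext x; simp only [Finset.mem_union, Finset.mem_Icc, Finset.mem_singleton]; omega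
    · omega

theorem hasHamPath_oddAdj_to_four_mul_add_one (hj : j < K) :
    HasHamPath (OddAdj K) (Finset.Icc 1 (4 * K + 1)) (4 * j + 5) (4 * j + 1) := by
  obtain ⟨n, rfl⟩ := Nat.exists_eq_add_of_lt hj
  have start_block : HasHamPath (OddAdj (j + n + 1)) (Finset.Icc (4 * j + 3) (4 * j + 5))
      (4 * j + 5) (4 * j + 3) :=
    hasHamPath_oddAdj_descending (by omega) (by omega) (by omega) (by omega)
  have later_blocks := hasHamPath_oddAdj_blocks (K := j + n + 1) (j := j) (n := j + n) (by omega)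
    (by omega)
  have initial_run : HasHamPath (OddAdj (j + n + 1)) (Finset.Icc 1 (4 * j + 1)) 1 (4 * j + 1) :=
    hasHamPath_oddAdj_ascending (by omega) (by omega) (by omega)
  convert (start_block.append (by unfold OddAdj; omega) later_blocks
    (by grind [Finset.disjoint_left])).append (by unfold OddAdj; omega) initial_run
    (by grind [Finset.disjoint_left]) using 1
  ext x; simp only [Finset.mem_union, Finset.mem_Icc, Finset.mem_singleton]; omega

theorem hasHamPath_oddAdj_to_four_mul_add_seven (hj : j + 1 < K) :
    HasHamPath (OddAdj K) (Finset.Icc 1 (4 * K + 1)) (4 * j + 3) (4 * j + 7) := by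
  obtain ⟨n, rfl⟩ := Nat.exists_eq_add_of_lt hj
  have start_block : HasHamPath (OddAdj (j + 1 + n + 1)) (Finset.Icc (4 * j + 3) (4 * j + 5))
      (4 * j + 3) (4 * j + 5) := hasHamPath_oddAdj_ascending (by omega) (by omega) (by omega)
  have later_blocks := hasHamPath_oddAdj_blocks (K := j + 1 + n + 1) (j := j + 1) (n := j + 1 + n)
    (by omega) (by omega)
  have initial_run : HasHamPath (OddAdj (j + 1 + n + 1)) (Finset.Icc 1 (4 * j + 2)) 1 (4 * j + 2) :=
    hasHamPath_oddAdj_ascending (by omega) (by omega) (by omega)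
  have end_block : HasHamPath (OddAdj (j + 1 + n + 1)) (Finset.Icc (4 * j + 7) (4 * j + 9))
      (4 * j + 9) (4 * j + 7) :=
    hasHamPath_oddAdj_descending (by omega) (by omega) (by omega) (by omega)
  convert ((start_block.append (by unfold OddAdj; omega) later_blocks
    (by grind [Finset.disjoint_left])).append (by unfold OddAdj; omega) initial_run
    (by grind [Finset.disjoint_left])).append (by unfold OddAdj; omega) end_block
    (by grind [Finset.disjoint_left]) using 1
  ext x; simp only [Finset.mem_union, Finset.mem_Icc, Finset.mem_singleton]; omega

theorem hasHamPath_oddAdj_to_three :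
    HasHamPath (OddAdj (n + 2)) (Finset.Icc 1 (4 * n + 9)) (4 * n + 7) 3 := by
  have start_pair : HasHamPath (OddAdj (n + 2)) (Finset.Icc (4 * n + 6) (4 * n + 7))
      (4 * n + 7) (4 * n + 6) :=
    hasHamPath_oddAdj_descending (by omega) (by omega) (by omega) (by omega)
  have origin : HasHamPath (OddAdj (n + 2)) {1} 1 1 := hasHamPath_singleton
  have middle_blocks := hasHamPath_oddAdj_blocks (K := n + 2) (j := 0) (n := n) (by omega)
    (by omega)
  have top_pair : HasHamPath (OddAdj (n + 2)) (Finset.Icc (4 * n + 8) (4 * n + 9))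
      (4 * n + 9) (4 * n + 8) :=
    hasHamPath_oddAdj_descending (by omega) (by omega) (by omega) (by omega)
  have end_block : HasHamPath (OddAdj (n + 2)) (Finset.Icc 3 5) 5 3 :=
    hasHamPath_oddAdj_descending (by omega) (by omega) (by omega) (by omega)
  convert (((start_pair.append (by unfold OddAdj; omega) origin
    (by grind [Finset.disjoint_left])).append (by unfold OddAdj; omega) middle_blocks
    (by grind [Finset.disjoint_left])).append (by unfold OddAdj; omega) top_pair
    (by grind [Finset.disjoint_left])).append (by unfold OddAdj; omega) end_block
    (by grind [Finset.disjoint_left]) using 1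
  ext x; simp only [Finset.mem_union, Finset.mem_Icc, Finset.mem_singleton]; omega

theorem hasHamPath_oddPartner (hK : 2 ≤ K) (hv : v % 2 = 1) (hvK : v ≤ 4 * K + 1) :
    HasHamPath (OddAdj K) (Finset.Icc 1 (4 * K + 1)) (oddPartner K v) v := by
  unfold oddPartner
  split_ifs with h_last h_three h_mod
  · exact h_last ▸ hasHamPath_oddAdj_ascending (by omega) (by omega) (by omega)
  · obtain ⟨n, rfl⟩ := Nat.exists_eq_add_of_le' hK
    exact h_three ▸ hasHamPath_oddAdj_to_three
  · obtain ⟨j, rfl⟩ : ∃ j, v = 4 * j + 1 := ⟨v / 4, by omega⟩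
    exact hasHamPath_oddAdj_to_four_mul_add_one (by omega)
  · obtain ⟨j, rfl⟩ : ∃ j, v = 4 * j + 7 := ⟨v / 4 - 1, by omega⟩
    exact hasHamPath_oddAdj_to_four_mul_add_seven (by omega)

theorem hasHamPath_oddAdj_iff (hK : 2 ≤ K) (hv : v % 2 = 1) (hvK : v ≤ 4 * K + 1) :
    HasHamPath (OddAdj K) (Finset.Icc 1 (4 * K + 1)) u v ↔ u = oddPartner K v :=
  ⟨fun ⟨_, hp⟩ => hp.eq_oddPartner hK hv, fun h => h ▸ hasHamPath_oddPartner hK hv hvK⟩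

theorem sum_Icc_neg_neg_one_pow (n : ℕ) :
    ∑ x ∈ Finset.Icc 1 (2 * n + 1), -(-1 : ℤ) ^ x = 1 := by
  induction n with
  | zero => simp
  | succ n ih =>
    rw [mul_add, Finset.sum_Icc_succ_top (by omega), Finset.sum_Icc_succ_top (by omega), ih]
    ring

theorem oddOut_mod_two (hm : m < 2 * K + 1) : oddOut (2 * K + 1) (m + 1) % 2 = 1 := by
  unfold oddOut
  simp only [Nat.even_iff]
  split_ifs <;> omega

theorem oddOut_le (hm : m < 2 * K + 1) : oddOut (2 * K + 1) (m + 1) ≤ 4 * K + 1 := by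
  unfold oddOut
  simp only [Nat.even_iff]
  split_ifs <;> omega

theorem oddPartner_oddOut (hm : m < 2 * K + 1) :
    oddPartner K (oddOut (2 * K + 1) (m + 1)) = 2 * m + 1 := by
  unfold oddOut oddPartner
  simp only [Nat.even_iff]
  split_ifs <;> omega

theorem singleVisit_oddAdj {k : ℕ} {inc out : Fin k → ℕ} (hinc : ∀ j, inc j % 2 = 1)
    (hout : ∀ j, out j % 2 = 1) :
    SingleVisit (OddAdj K) (Finset.Icc 1 (4 * K + 1)) inc out := by
  refine singleVisit_of_alternating (w := fun x => -(-1) ^ x) (fun x y hxy => ?_)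
    (fun j => ?_) (fun j => ?_) ?_
  · have h_odd := hxy.odd_add
    obtain hx | hx := x.even_or_odd
    · simp [hx.neg_one_pow, ((Nat.odd_add'.1 h_odd).2 hx).neg_one_pow]
    · simp [hx.neg_one_pow, ((Nat.odd_add.1 h_odd).1 hx).neg_one_pow]
  · simp [(Nat.odd_iff.2 (hinc j)).neg_one_pow]
  · simp [(Nat.odd_iff.2 (hout j)).neg_one_pow]
  · rw [show 4 * K + 1 = 2 * (2 * K) + 1 by ring, sum_Icc_neg_neg_one_pow]

theorem isInOutGraph_oddAdj (hK : 2 ≤ K) :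
    IsInOutGraph (OddAdj K) (Finset.Icc 1 (4 * K + 1)) (fun j : Fin (2 * K + 1) => 2 * (j : ℕ) + 1)
      (fun j => oddOut (2 * K + 1) (j + 1)) where
  no_loops x h := by unfold OddAdj at h; omega
  edge_mem x y h := by
    simp only [Finset.mem_Icc]
    unfold OddAdj at h
    omega
  inc_mem j := by
    rw [Finset.mem_Icc]
    omega
  out_mem j := by
    have h_odd := oddOut_mod_two j.2
    have h_le := oddOut_le j.2
    rw [Finset.mem_Icc]
    omega
  inc_inj i j hij := Fin.ext (by simpa using hij)
  out_inj i j hij := by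
    have hi := oddPartner_oddOut i.2
    have hj := oddPartner_oddOut j.2
    simp only at hij
    rw [hij, hj] at hi
    omega
  paired j m := by
    have := hasHamPath_oddAdj_iff (u := 2 * j + 1) hK (oddOut_mod_two m.2) (oddOut_le m.2)
    rw [oddPartner_oddOut m.2] at this
    exact this.trans (by omega)
  single_visit := singleVisit_oddAdj (fun j => by omega) fun j => oddOut_mod_two j.2

end OddGraph

/-- for odd `k ≥ 5`, the digraph `S_k` with incoming vertices
`i_j = 2j - 1` and outgoing vertices `o_j` is a `k`-in-out graph, it has exactly
`2k - 1` vertices, and `2k - 1` is the minimum possible number of vertices of a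
`k`-in-out graph. -/
theorem oddSk_isInOut_optimal (k : ℕ) (hk : 5 ≤ k) (hko : Odd k) :
    IsInOutGraph (fun x y => (x, y) ∈ oddEdges k) (Finset.Icc 1 (2 * k - 1))
      (fun j : Fin k => 2 * (j : ℕ) + 1) (fun j : Fin k => oddOut k ((j : ℕ) + 1)) ∧
    (Finset.Icc 1 (2 * k - 1)).card = 2 * k - 1 ∧
    ∀ {β : Type} [DecidableEq β] (E' : β → β → Prop) (Vset' : Finset β)
      (inc' out' : Fin k → β), IsInOutGraph E' Vset' inc' out' →
        2 * k - 1 ≤ Vset'.card := by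
  obtain ⟨K, rfl⟩ := hko
  have hK : 2 ≤ K := by omega
  have edges_eq : (fun x y => (x, y) ∈ oddEdges (2 * K + 1)) = OddAdj K := by
    ext x y
    exact mem_oddEdges_iff (by omega)
  have card_eq : 2 * (2 * K + 1) - 1 = 4 * K + 1 := by omega
  refine ⟨?_, by simp, fun _ _ _ _ h => h.two_mul_sub_one_le_card⟩
  rw [edges_eq, card_eq]
  exact isInOutGraph_oddAdj hK
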